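/- arXiv:2510.20938 — 2 statements merged into one kernel-verified Lean document; each statement's English description precedes it below -/
import Mathlib

section
/- Let f : M → M be a local homeomorphism of a compact metric space M with dense preorbits satisfying (H1), let φ : M → ℝ be continuous satisfying (H2), and let ν be a reference measure for (f,φ). For j ∈ ℕ let G_j be the set of points having j as a Gibbs time, and define η_n = (1/n) Σ_{j=0}^{n-1} f^j_*(ν|_{G_j}). Then for each n ∈ ℕ the measure η_n is absolutely continuous with respect to ν. -/
open MeasureTheory Set Filter Topology
open scoped ENNReal NNReal

noncomputable section

namespace PaperWG

variable {X : Type*}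

section Dyn

variable [MetricSpace X]

/-- The dynamical ball `B_ε(x,n) = {y : d(T^j x, T^j y) < ε for all 0 ≤ j ≤ n}`. -/
def dynBall (T : X → X) (x : X) (n : ℕ) (ε : ℝ) : Set X :=
  {y | ∀ j ≤ n, dist (T^[j] x) (T^[j] y) < ε}

/-- Birkhoff sum `S_n φ(x) = ∑_{j=0}^{n-1} φ(T^j x)`. -/
def birkhoff (T : X → X) (φ : X → ℝ) (n : ℕ) (x : X) : ℝ :=
  ∑ j ∈ Finset.range n, φ (T^[j] x)

/-- `R_{n,ε}φ(x) = sup_{y ∈ B_ε(x,n)} S_n φ(y)`. -/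
def rSup (T : X → X) (φ : X → ℝ) (n : ℕ) (ε : ℝ) (x : X) : ℝ :=
  sSup (birkhoff T φ n '' dynBall T x n ε)

/-- `m_T(φ,Λ,ε,N,γ)`: infimum over countable covers of `Λ` by dynamical balls with
time at least `N` of `∑ exp(-γ n + R_{n,ε}φ(x))`. -/
def mPre (T : X → X) (φ : X → ℝ) (Λ : Set X) (ε : ℝ) (N : ℕ) (γ : ℝ) : ℝ≥0∞ :=
  ⨅ (U : Set (X × ℕ)) (_ : U.Countable) (_ : ∀ p ∈ U, N ≤ p.2)
    (_ : Λ ⊆ ⋃ p ∈ U, dynBall T p.1 p.2 ε),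
    ∑' p : U, ENNReal.ofReal (Real.exp (-γ * (p.1.2 : ℝ) + rSup T φ p.1.2 ε p.1.1))

/-- `m_T(φ,Λ,ε,γ) = lim_{N→∞} m_T(φ,Λ,ε,N,γ)`; the quantity is nondecreasing in `N`,
so the limit is the supremum. -/
def mRel (T : X → X) (φ : X → ℝ) (Λ : Set X) (ε γ : ℝ) : ℝ≥0∞ :=
  ⨆ N : ℕ, mPre T φ Λ ε N γ

/-- `P_T(φ,Λ,ε) = inf {γ : m_T(φ,Λ,ε,γ) = 0}`. -/
def presRelEps (T : X → X) (φ : X → ℝ) (Λ : Set X) (ε : ℝ) : ℝ :=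
  sInf {γ : ℝ | mRel T φ Λ ε γ = 0}

/-- The relative topological pressure `P_T(φ,Λ) = lim_{ε→0} P_T(φ,Λ,ε)`; the quantity is
nonincreasing in `ε`, so the limit is the supremum over `ε > 0`. -/
def presRel (T : X → X) (φ : X → ℝ) (Λ : Set X) : ℝ :=
  ⨆ ε : {e : ℝ // 0 < e}, presRelEps T φ Λ ε.1

/-- The topological pressure `P_T(φ) = P_T(φ, X)`. -/
def pres (T : X → X) (φ : X → ℝ) : ℝ :=
  presRel T φ Set.univ

/-- `g` maps `A` homeomorphically onto `B`. -/
def MapsHomeomorphicallyOnto (g : X → X) (A B : Set X) : Prop :=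
  g '' A = B ∧ ∃ e : A ≃ₜ B, ∀ a : A, (e a : X) = g a

/-- Condition (*): `n ≥ 1` is a Gibbs time for `x` when `f^n` maps the dynamical ball
`B_ε(x,n)` homeomorphically onto the ball `B(f^n x, ε)` for every `0 < ε < δ₀`. -/
def IsGibbsTime (f : X → X) (δ₀ : ℝ) (x : X) (n : ℕ) : Prop :=
  1 ≤ n ∧ ∀ ε : ℝ, 0 < ε → ε < δ₀ →
    MapsHomeomorphicallyOnto (f^[n]) (dynBall f x n ε) (Metric.ball (f^[n] x) ε)

/-- The set `G` of Hypothesis (H1): points whose frequency of Gibbs times is at least `θ`. -/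
def gibbsSet (f : X → X) (δ₀ θ : ℝ) : Set X :=
  {x | θ ≤ Filter.atTop.limsup
    (fun n : ℕ => ((Set.Icc 1 n ∩ {j | IsGibbsTime f δ₀ x j}).ncard : ℝ) / n)}

/-- Every preorbit `⋃_{j≥0} f^{-j}(x)` is dense. -/
def DensePreorbits (f : X → X) : Prop :=
  ∀ x : X, Dense (⋃ n : ℕ, f^[n] ⁻¹' {x})

/-- Hypothesis (H2): Bowen property of `φ` on `G` at Gibbs times. -/
def BowenOnGibbs (f : X → X) (φ : X → ℝ) (δ₀ : ℝ) (G : Set X) : Prop :=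
  ∃ V > 0, ∃ ε > 0, ∀ x ∈ G, ∀ n : ℕ, IsGibbsTime f δ₀ x n →
    ∀ y ∈ dynBall f x n ε, ∀ z ∈ dynBall f x n ε,
      |∑ i ∈ Finset.range (n + 1), (φ (f^[i] y) - φ (f^[i] z))| ≤ V

/-- Bowen property of `φ` on a set `S` at all times (Hypothesis (H4)). -/
def BowenOn (T : X → X) (φ : X → ℝ) (S : Set X) : Prop :=
  ∃ ε > 0, ∃ V > 0, ∀ x ∈ S, ∀ n : ℕ,
    ∀ y ∈ dynBall T x n ε, ∀ z ∈ dynBall T x n ε,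
      |∑ j ∈ Finset.range (n + 1), (φ (T^[j] y) - φ (T^[j] z))| ≤ V

/-- Hypotheses (H3)/(H5): the topological pressure is located on `S`:
`P_T(φ, Sᶜ) < P_T(φ, S) = P_T(φ)`. -/
def PressureLocatedOn (T : X → X) (φ : X → ℝ) (S : Set X) : Prop :=
  presRel T φ Sᶜ < presRel T φ S ∧ presRel T φ S = pres T φ

end Dyn

section Meas

variable [MetricSpace X] [MeasurableSpace X]

/-- `μ` is a weak Gibbs measure for `(T,φ)` with constant `P`. -/
def IsWeakGibbs (T : X → X) (φ : X → ℝ) (μ : Measure X) (P : ℝ) : Prop :=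
  ∃ δ > 0, ∀ ε : ℝ, 0 < ε → ε ≤ δ → ∃ K > 0,
    ∀ᵐ x ∂μ, ∃ nk : ℕ → ℕ, StrictMono nk ∧
      ∀ k : ℕ, ∀ y ∈ dynBall T x (nk k) ε,
        ENNReal.ofReal (K⁻¹ * Real.exp (birkhoff T φ (nk k) y - (nk k : ℝ) * P))
            ≤ μ (dynBall T x (nk k) ε) ∧
          μ (dynBall T x (nk k) ε)
            ≤ ENNReal.ofReal (K * Real.exp (birkhoff T φ (nk k) y - (nk k : ℝ) * P))

/-- The Ruelle–Perron–Frobenius transfer operator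
`L_{f,φ} ψ (x) = ∑_{y ∈ f⁻¹(x)} e^{φ(y)} ψ(y)`. -/
def transferOp (f : X → X) (φ ψ : X → ℝ) (x : X) : ℝ :=
  ∑' y : (f ⁻¹' {x} : Set X), Real.exp (φ y) * ψ y

/-- A reference measure for `(f,φ)`: a Borel probability measure `ν` with
`L*_{f,φ} ν = λ ν`. -/
def IsReferenceMeasure (f : X → X) (φ : X → ℝ) (ν : Measure X) (lam : ℝ) : Prop :=
  IsProbabilityMeasure ν ∧ 0 < lam ∧
    ∀ ψ : X → ℝ, Continuous ψ →
      ∫ x, transferOp f φ ψ x ∂ν = lam * ∫ x, ψ x ∂ν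

end Meas

section Entropy

variable [MeasurableSpace X]

/-- Entropy of the finite partition of `X` by the fibers of `P`. -/
def partEntropy (μ : Measure X) {α : Type} [Fintype α] (P : X → α) : ℝ :=
  ∑ a : α, Real.negMulLog ((μ (P ⁻¹' {a})).toReal)

/-- Kolmogorov–Sinai entropy of `μ` with respect to the partition given by `P`. -/
def entropyWrt (T : X → X) (μ : Measure X) {k : ℕ} (P : X → Fin k) : ℝ :=
  Filter.atTop.liminf fun n : ℕ =>
    partEntropy μ (fun x => fun j : Fin n => P (T^[(j : ℕ)] x)) / n

/-- Kolmogorov–Sinai (metric) entropy of `μ`: supremum over finite measurable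
partitions of the entropy of `T` with respect to the partition. -/
def metricEntropy (T : X → X) (μ : Measure X) : ℝ :=
  ⨆ p : Σ k : ℕ, {P : X → Fin k // Measurable P}, entropyWrt T μ p.2.1

end Entropy

section Equi

variable [MetricSpace X] [MeasurableSpace X]

/-- `μ` is an equilibrium state for `(T,φ)`: it is `T`-invariant and attains the
supremum of `η ↦ h_η(T) + ∫ φ dη` over all `T`-invariant Borel probability measures. -/
def IsEquilibriumState (T : X → X) (φ : X → ℝ) (μ : Measure X) : Prop :=
  IsProbabilityMeasure μ ∧ Measure.map T μ = μ ∧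
    ∀ η : Measure X, IsProbabilityMeasure η → Measure.map T η = η →
      metricEntropy T η + ∫ x, φ x ∂η ≤ metricEntropy T μ + ∫ x, φ x ∂μ

/-- A generating partition for `G`: a countable measurable partition of `G` with finite
entropy whose iterates under `f` generate the Borel σ-algebra of `G` (in the sense that
every measurable set agrees on `G` with a set in the σ-algebra generated by the cylinders). -/
structure GeneratingPartition (f : X → X) (G : Set X) : Type _ where
  part : ℕ → Set X
  measurable : ∀ i, MeasurableSet (part i)
  disj : Pairwise (Function.onFun Disjoint part)
  cover : G = ⋃ i, part i
  finiteEntropy : ∀ μ : Measure X, IsProbabilityMeasure μ →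
    Summable fun i => Real.negMulLog ((μ (part i)).toReal)
  generates : ∀ B : Set X, MeasurableSet B →
    ∃ B' : Set X,
      MeasurableSet[MeasurableSpace.generateFrom
        {s : Set X | ∃ (n : ℕ) (a : Fin n → ℕ), s = ⋂ j : Fin n, f^[(j : ℕ)] ⁻¹' part (a j)}] B' ∧
      B ∩ G = B' ∩ G

end Equi

end PaperWG

/-!
Since `L_{f,φ}(ψ ∘ f) = ψ · L_{f,φ} 1`, the eigenmeasure equation applied to `ψ ∘ f` reads
`∫ ψ · L_{f,φ} 1 dν = λ ∫ ψ d(f_*ν)`. Hence `f_*ν` has density `λ⁻¹ L_{f,φ} 1` with respect to `ν`,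
so `f` is non-singular: `ν(A) = 0` forces `ν(f⁻¹ A) = 0`. Then so are its iterates, and both
restricting `ν` before pushing it forward and averaging preserve absolute continuity.
-/

namespace PaperWG

section WithDensity

variable {Ω : Type*} [TopologicalSpace Ω] [HasOuterApproxClosed Ω] [MeasurableSpace Ω]
  [BorelSpace Ω]

theorem eq_withDensity_ofReal_of_forall_integral_eq {μ ν : Measure Ω} [IsFiniteMeasure μ]
    {h : Ω → ℝ} (h_nonneg : 0 ≤ᵐ[ν] h) (h_int : Integrable h ν)
    (h_eq : ∀ g : BoundedContinuousFunction Ω ℝ, ∫ x, g x ∂μ = ∫ x, h x * g x ∂ν) :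
    μ = ν.withDensity fun x => ENNReal.ofReal (h x) := by
  have : IsFiniteMeasure (ν.withDensity fun x => ENNReal.ofReal (h x)) :=
    isFiniteMeasure_withDensity_ofReal h_int.hasFiniteIntegral
  refine ext_of_forall_integral_eq_of_IsFiniteMeasure fun g => ?_
  calc ∫ x, g x ∂μ
      = ∫ x, h x * g x ∂ν := h_eq g
    _ = ∫ x, (ENNReal.ofReal (h x)).toReal • g x ∂ν := by
      refine integral_congr_ae (h_nonneg.mono fun x hx => ?_)
      simp only [ENNReal.toReal_ofReal hx, smul_eq_mul]
    _ = ∫ x, g x ∂ν.withDensity fun x => ENNReal.ofReal (h x) :=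
      (integral_withDensity_eq_integral_toReal_smul₀ h_int.aemeasurable.ennreal_ofReal
        (ae_of_all _ fun _ => ENNReal.ofReal_lt_top) g).symm

end WithDensity

section TransferOperator

variable {M : Type*} {f : M → M} {φ : M → ℝ}

theorem transferOp_nonneg {ψ : M → ℝ} (hψ : 0 ≤ ψ) : 0 ≤ transferOp f φ ψ :=
  fun _ => tsum_nonneg fun y => mul_nonneg (Real.exp_pos _).le (hψ y)

theorem transferOp_mul_comp (ψ g : M → ℝ) :
    transferOp f φ (ψ * g ∘ f) = transferOp f φ ψ * g := by
  ext x
  calc ∑' y : f ⁻¹' {x}, Real.exp (φ y) * (ψ y * g (f y))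
      = ∑' y : f ⁻¹' {x}, Real.exp (φ y) * ψ y * g x :=
        tsum_congr fun y => by rw [show f y = x from y.2, mul_assoc]
    _ = transferOp f φ ψ x * g x := tsum_mul_right

theorem transferOp_comp (g : M → ℝ) : transferOp f φ (g ∘ f) = transferOp f φ 1 * g := by
  rw [← transferOp_mul_comp, one_mul]

end TransferOperator

namespace IsReferenceMeasure

variable {M : Type*} [MetricSpace M] [MeasurableSpace M] {f : M → M} {φ : M → ℝ} {ν : Measure M}
  {lam : ℝ}

theorem integral_transferOp_one (href : IsReferenceMeasure f φ ν lam) :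
    ∫ x, transferOp f φ 1 x ∂ν = lam := by
  obtain ⟨_, _, h_eigen⟩ := href
  simpa using h_eigen 1 continuous_one

/-- The Bochner integral of a non-integrable function is `0`, whereas here it is `lam > 0`. -/
theorem integrable_transferOp_one (href : IsReferenceMeasure f φ ν lam) :
    Integrable (transferOp f φ 1) ν :=
  .of_integral_ne_zero <| href.integral_transferOp_one.trans_ne href.2.1.ne'

theorem integral_comp (href : IsReferenceMeasure f φ ν lam) (hf : Continuous f) {g : M → ℝ}
    (hg : Continuous g) : ∫ x, g (f x) ∂ν = ∫ x, lam⁻¹ * transferOp f φ 1 x * g x ∂ν := by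
  obtain ⟨_, hlam, h_eigen⟩ := href
  have h := h_eigen (g ∘ f) (hg.comp hf)
  rw [transferOp_comp] at h
  simp only [mul_assoc, integral_const_mul]
  exact (eq_inv_mul_iff_mul_eq₀ hlam.ne').mpr h.symm

variable [BorelSpace M]

theorem map_eq_withDensity (href : IsReferenceMeasure f φ ν lam) (hf : Continuous f) :
    ν.map f = ν.withDensity fun x => ENNReal.ofReal (lam⁻¹ * transferOp f φ 1 x) := by
  have : IsProbabilityMeasure ν := href.1
  refine eq_withDensity_ofReal_of_forall_integral_eq (ae_of_all _ fun x => ?_)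
    (href.integrable_transferOp_one.const_mul _) fun g => ?_
  · exact mul_nonneg (inv_nonneg.mpr href.2.1.le) (transferOp_nonneg zero_le_one x)
  · rw [integral_map hf.aemeasurable g.continuous.aestronglyMeasurable]
    exact href.integral_comp hf g.continuous

theorem quasiMeasurePreserving (href : IsReferenceMeasure f φ ν lam) (hf : Continuous f) :
    Measure.QuasiMeasurePreserving f ν ν :=
  ⟨hf.measurable, href.map_eq_withDensity hf ▸ withDensity_absolutelyContinuous _ _⟩

end IsReferenceMeasure

theorem etaN_absolutelyContinuous_general {M : Type*} [MetricSpace M] [MeasurableSpace M]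
    [BorelSpace M] {f : M → M} (hf : Continuous f) {φ : M → ℝ} {ν : Measure M} {lam : ℝ}
    (href : IsReferenceMeasure f φ ν lam) (A : ℕ → Set M) (n : ℕ) :
    ((n : ℝ≥0∞)⁻¹ • ∑ j ∈ Finset.range n, Measure.map (f^[j]) (ν.restrict (A j))) ≪ ν := by
  have h_map (j : ℕ) : Measure.map (f^[j]) (ν.restrict (A j)) ≪ ν :=
    (((href.quasiMeasurePreserving hf).iterate j).mono_left
      Measure.restrict_le_self.absolutelyContinuous).absolutelyContinuous
  have h_sum : ∑ j ∈ Finset.range n, Measure.map (f^[j]) (ν.restrict (A j)) ≪ ν :=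
    Finset.sum_induction _ (· ≪ ν) (fun _ _ => Measure.AbsolutelyContinuous.add_left) (.zero ν)
      fun j _ => h_map j
  exact h_sum.smul_left _

/-- Lemma: each Cesàro average `η_n = (1/n) ∑_{j<n} f^j_*(ν|_{G_j})` is absolutely
continuous with respect to the reference measure `ν`. -/
theorem etaN_absolutelyContinuous
    {M : Type*} [MetricSpace M] [CompactSpace M] [MeasurableSpace M] [BorelSpace M]
    (f : M → M) (hf : IsLocalHomeomorph f) (hdense : DensePreorbits f)
    (δ₀ : ℝ) (hδ₀ : 0 < δ₀) (θ : ℝ) (hθ : 0 < θ)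
    (G : Set M) (hG : G = gibbsSet f δ₀ θ)
    (φ : M → ℝ) (hφ : Continuous φ)
    (hH2 : BowenOnGibbs f φ δ₀ G)
    (ν : Measure M) (lam : ℝ) (href : IsReferenceMeasure f φ ν lam) :
    ∀ n : ℕ,
      ((n : ℝ≥0∞)⁻¹ • ∑ j ∈ Finset.range n,
        Measure.map (f^[j]) (ν.restrict {x | IsGibbsTime f δ₀ x j})) ≪ ν :=
  etaN_absolutelyContinuous_general hf.continuous href _

end PaperWG
end
end

section
/- Let f : M → M be a local homeomorphism of a compact metric space M with dense preorbits satisfying (H1), let φ : M → ℝ be continuous satisfying (H2) and (H3), and suppose the sequence of Gibbs times of every x ∈ G is non-lacunar. Let μ_φ be the ergodic weak Gibbs measure (equilibrium state) of (f,φ). Then for every continuous ψ : M → ℝ, every c ∈ ℝ, and every ergodic f-invariant Borel probability measure η with η(G) = 1 and ∫ψ dη > c, one has liminf_{n→∞} (1/n) log μ_φ({x ∈ M : (1/n) Σ_{j=0}^{n-1} ψ(f^j(x)) > c}) ≥ h_η(f) + ∫φ dη − P_f(φ). -/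
open MeasureTheory Set Filter Topology
open scoped ENNReal NNReal

noncomputable section

namespace PaperWG

/-!
Let `η` be ergodic with `η G = 1` and `c < ∫ ψ dη`. By the mean ergodic theorem, for large `n` the
Birkhoff averages of `φ` and `ψ` are close to their integrals outside a set of small `η`-measure,
and by uniform continuity of `ψ` the dynamical balls around such typical points lie in the deviation
set. Each of them has `μφ`-measure at least `exp (n (∫ φ dη - pres f φ - o(1)))`: compare it with
the ball at the next Gibbs time `m ≥ n`, where `m - n = o(n)` by non-lacunarity.

It remains to find about `exp (n h)` disjoint balls around typical points, where `h` is the entropy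
of a finite partition. By inner regularity, the cells become separated by a positive distance after
deleting a set `U` of small measure. Typical orbits rarely visit `U`, so the itineraries of typical
points in one dynamical ball lie in a Hamming ball of small relative radius, which has an
exponential growth rate tending to zero with that radius. On the other hand, typical points have at
least about `exp (n h)` itineraries, so a maximal separated set of them is as large as needed.
-/

section Counting

theorem sum_pow_hammingDist {ι α R : Type*} [Fintype ι] [DecidableEq ι] [Fintype α]
    [DecidableEq α] [CommRing R] (w : ι → α) (σ : R) :
    ∑ v : ι → α, σ ^ hammingDist v w = (1 + (Fintype.card α - 1) * σ) ^ Fintype.card ι := by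
  have hpow (v : ι → α) : σ ^ hammingDist v w = ∏ i, if v i = w i then 1 else σ := by
    simp [Finset.prod_ite, hammingDist]
  have hletter (i : ι) :
      ∑ a, (if a = w i then 1 else σ) = 1 + (Fintype.card α - 1) * σ := by
    rw [← Finset.add_sum_erase _ _ (Finset.mem_univ (w i)), if_pos rfl,
      Finset.sum_congr rfl fun a ha ↦ if_neg (Finset.ne_of_mem_erase ha), Finset.sum_const,
      Finset.card_erase_of_mem (Finset.mem_univ _), Finset.card_univ, nsmul_eq_mul,
      Nat.cast_pred (Fintype.card_pos_iff.2 ⟨w i⟩)]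
  simp_rw [hpow]
  rw [← Fintype.piFinset_univ,
    ← Finset.prod_univ_sum (fun _ ↦ Finset.univ) fun i a ↦ if a = w i then 1 else σ]
  simp [hletter]

-- Chernoff bound: the weight `σ ^ hammingDist v w` of a word `v` is at least `σ ^ r` on the ball.
theorem card_hammingBall_le_exp {ι α : Type*} [Fintype ι] [Fintype α] [DecidableEq α]
    (w : ι → α) {σ : ℝ} (hσ₀ : 0 < σ) (hσ₁ : σ ≤ 1) (r : ℝ) :
    ({v : ι → α | (hammingDist v w : ℝ) ≤ r}.ncard : ℝ) ≤
      Real.exp (Fintype.card ι * (Fintype.card α * σ) - r * Real.log σ) := by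
  classical
  have hweight : (Finset.univ.filter fun v : ι → α ↦ (hammingDist v w : ℝ) ≤ r).card * σ ^ r ≤
      ∑ v : ι → α, σ ^ hammingDist v w := by
    rw [← nsmul_eq_mul, ← Finset.sum_const]
    refine (Finset.sum_le_sum fun v hv ↦ ?_).trans <|
      Finset.sum_le_sum_of_subset_of_nonneg (Finset.filter_subset _ _) fun _ _ _ ↦ by positivity
    rw [← Real.rpow_natCast]
    exact Real.rpow_le_rpow_of_exponent_ge hσ₀ hσ₁ (Finset.mem_filter.1 hv).2
  have hletter : 0 ≤ 1 + ((Fintype.card α : ℝ) - 1) * σ := by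
    nlinarith [mul_nonneg (Nat.cast_nonneg (α := ℝ) (Fintype.card α)) hσ₀.le]
  have htotal : ∑ v : ι → α, σ ^ hammingDist v w ≤
      Real.exp (Fintype.card ι * (Fintype.card α * σ)) := by
    rw [sum_pow_hammingDist, Real.exp_nat_mul]
    gcongr
    linarith [Real.add_one_le_exp (Fintype.card α * σ)]
  rw [Set.ncard_eq_toFinset_card', Set.toFinset_ofPred, Real.exp_sub, mul_comm r,
    ← Real.rpow_def_of_pos hσ₀, le_div_iff₀ (by positivity)]
  exact hweight.trans htotal

theorem exists_pairwise_not_of_refl_of_symm {α : Type*} {r : α → α → Prop} (hrefl : ∀ a, r a a)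
    (hsymm : ∀ a b, r a b → r b a) (s : Finset α) :
    ∃ t ⊆ s, (t : Set α).Pairwise (fun a b ↦ ¬ r a b) ∧ ∀ a ∈ s, ∃ b ∈ t, r b a := by
  classical
  obtain ⟨t, -, ht⟩ := (s.powerset.filter fun t : Finset α ↦
    (t : Set α).Pairwise (fun a b ↦ ¬ r a b)).exists_le_maximal (a := ∅) (by simp)
  obtain ⟨hts, hpair⟩ := Finset.mem_filter.1 ht.prop
  rw [Finset.mem_powerset] at hts
  refine ⟨t, hts, hpair, fun a ha ↦ ?_⟩
  by_contra! hfar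
  have hinsert : insert a t ∈ s.powerset.filter
      fun t : Finset α ↦ (t : Set α).Pairwise (fun a b ↦ ¬ r a b) := by
    rw [Finset.mem_filter, Finset.mem_powerset, Finset.coe_insert]
    exact ⟨Finset.insert_subset ha hts, hpair.insert fun b hb _ ↦
      ⟨fun hab ↦ hfar b hb (hsymm a b hab), hfar b hb⟩⟩
  exact hfar a (ht.le_of_ge hinsert (Finset.subset_insert a t) (Finset.mem_insert_self a t))
    (hrefl a)

end Counting

section PartitionEntropy

theorem negMulLog_le_mul_log_add_inv_sub {x C : ℝ} (hx : 0 ≤ x) (hC : 0 < C) :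
    Real.negMulLog x ≤ x * Real.log C + C⁻¹ - x := by
  have h := Real.negMulLog_le_one_sub_self (mul_nonneg hx hC.le)
  rw [Real.negMulLog_mul, Real.negMulLog_def] at h
  rw [Real.negMulLog, ← mul_le_mul_iff_of_pos_left hC]
  field_simp
  linarith

theorem sum_negMulLog_le_sum_mul_log_card {α : Type*} (s : Finset α) {p : α → ℝ}
    (hp : ∀ a ∈ s, 0 ≤ p a) :
    ∑ a ∈ s, Real.negMulLog (p a) ≤
      (∑ a ∈ s, p a) * Real.log s.card + 1 - ∑ a ∈ s, p a := by
  rcases s.eq_empty_or_nonempty with rfl | hs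
  · simp
  have hcard : (0 : ℝ) < s.card := by exact_mod_cast hs.card_pos
  calc ∑ a ∈ s, Real.negMulLog (p a)
      ≤ ∑ a ∈ s, (p a * Real.log s.card + (s.card : ℝ)⁻¹ - p a) :=
        Finset.sum_le_sum fun a ha ↦ negMulLog_le_mul_log_add_inv_sub (hp a ha) hcard
    _ = (∑ a ∈ s, p a) * Real.log s.card + 1 - ∑ a ∈ s, p a := by
        rw [Finset.sum_sub_distrib, Finset.sum_add_distrib, ← Finset.sum_mul, Finset.sum_const,
          nsmul_eq_mul, mul_inv_cancel₀ hcard.ne']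

variable {X : Type*} [MeasurableSpace X] (η : Measure X) [IsProbabilityMeasure η]
  {α : Type} [Fintype α]

theorem partEntropy_nonneg (P : X → α) : 0 ≤ partEntropy η P :=
  Finset.sum_nonneg fun _ _ ↦ Real.negMulLog_nonneg ENNReal.toReal_nonneg measureReal_le_one

theorem partEntropy_le_log_ncard_image [MeasurableSpace α] [MeasurableSingletonClass α]
    {P : X → α} (hP : Measurable P) {A : Set X} {d : ℝ} (hA : 1 - d ≤ η.real A) :
    partEntropy η P ≤ Real.log (P '' A).ncard + d * Real.log (Fintype.card α) + 1 := by
  classical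
  set p : α → ℝ := fun a ↦ η.real (P ⁻¹' {a})
  set W := (P '' A).toFinset
  have hmass (s : Finset α) : ∑ a ∈ s, p a = η.real (P ⁻¹' s) :=
    sum_measureReal_preimage_singleton s fun a _ ↦ hP (measurableSet_singleton a)
  have hW : 1 - d ≤ ∑ a ∈ W, p a := by
    rw [hmass]
    exact hA.trans (measureReal_mono fun x hx ↦ by simpa [W] using ⟨x, hx, rfl⟩)
  have hsum : ∑ a ∈ W, p a + ∑ a ∈ Wᶜ, p a = 1 := by
    rw [Finset.sum_add_sum_compl, hmass]
    simp
  have hp (a : α) : 0 ≤ p a := measureReal_nonneg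
  have hWc : 0 ≤ ∑ a ∈ Wᶜ, p a := Finset.sum_nonneg fun a _ ↦ hp a
  have htypical : (∑ a ∈ W, p a) * Real.log W.card ≤ Real.log W.card :=
    mul_le_of_le_one_left (Real.log_natCast_nonneg _) (by linarith)
  have hexceptional :
      (∑ a ∈ Wᶜ, p a) * Real.log (Wᶜ).card ≤ d * Real.log (Fintype.card α) := by
    have hlog : Real.log (Wᶜ).card ≤ Real.log (Fintype.card α) := by
      rcases (Wᶜ).eq_empty_or_nonempty with h | h
      · simpa [h] using Real.log_natCast_nonneg (Fintype.card α)
      · exact Real.log_le_log (by exact_mod_cast h.card_pos)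
          (by exact_mod_cast Finset.card_le_univ _)
    exact mul_le_mul (by linarith) hlog (Real.log_natCast_nonneg _) (by linarith)
  have hsplit : partEntropy η P =
      ∑ a ∈ W, Real.negMulLog (p a) + ∑ a ∈ Wᶜ, Real.negMulLog (p a) :=
    (Finset.sum_add_sum_compl W _).symm
  rw [hsplit, Set.ncard_eq_toFinset_card']
  linarith [sum_negMulLog_le_sum_mul_log_card W fun a _ ↦ hp a,
    sum_negMulLog_le_sum_mul_log_card Wᶜ fun a _ ↦ hp a]

end PartitionEntropy

section MeanErgodic

variable {X : Type*} [MeasurableSpace X] {f : X → X} {η : Measure X}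

section Koopman

variable {E : Type*} [NormedAddCommGroup E] [NormedSpace ℝ E] {p : ℝ≥0∞} [Fact (1 ≤ p)]

/-- The Koopman operator `g ↦ g ∘ f` of a measure-preserving map, as a contraction of `Lᵖ`. -/
def koopman (hf : MeasurePreserving f η η) : Lp E p η →L[ℝ] Lp E p η :=
  (Lp.compMeasurePreservingₗᵢ ℝ f hf).toContinuousLinearMap

theorem norm_koopman_le (hf : MeasurePreserving f η η) :
    ‖(koopman hf : Lp E p η →L[ℝ] Lp E p η)‖ ≤ 1 :=
  LinearIsometry.norm_toContinuousLinearMap_le _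

theorem iterate_koopman_toLp_ae_eq (hf : MeasurePreserving f η η) {ψ : X → E}
    (hψ : MemLp ψ p η) (j : ℕ) :
    ((koopman hf)^[j] (hψ.toLp ψ) : Lp E p η) =ᵐ[η] fun x ↦ ψ (f^[j] x) := by
  have hiter : (koopman hf)^[j] (hψ.toLp ψ) =
      Lp.compMeasurePreserving f^[j] (hf.iterate j) (hψ.toLp ψ) := by
    rw [← Lp.compMeasurePreserving_iterate]
    rfl
  rw [hiter]
  exact (Lp.coeFn_compMeasurePreserving _ _).trans <|
    (hf.iterate j).quasiMeasurePreserving.ae_eq_comp hψ.coeFn_toLp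

theorem birkhoffAverage_koopman_ae_eq (hf : MeasurePreserving f η η) {ψ : X → E}
    (hψ : MemLp ψ p η) (n : ℕ) :
    (birkhoffAverage ℝ (koopman hf) _root_.id n (hψ.toLp ψ) : Lp E p η) =ᵐ[η]
      birkhoffAverage ℝ f ψ n := by
  have hsum := (Lp.coeFn_finsetSum (Finset.range n) _).trans <|
    eventuallyEq_sum fun j _ ↦ iterate_koopman_toLp_ae_eq hf hψ j
  refine (Lp.coeFn_smul _ _).trans ?_
  filter_upwards [hsum] with x hx
  simp only [birkhoffAverage, birkhoffSum, Pi.smul_apply, _root_.id, hx, Finset.sum_apply]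

theorem exists_eq_const_of_koopman_eq [IsFiniteMeasure η] (hη : Ergodic f η) {u : Lp E p η}
    (hu : koopman hη.toMeasurePreserving u = u) : ∃ b, u = Lp.const p η b := by
  have hcomp := Lp.coeFn_compMeasurePreserving u hη.toMeasurePreserving
  rw [show Lp.compMeasurePreserving f hη.toMeasurePreserving u = u from hu] at hcomp
  obtain ⟨b, hb⟩ := hη.ae_eq_const_of_ae_eq_comp_ae (Lp.aestronglyMeasurable u) hcomp.symm
  exact ⟨b, Lp.ext <| hb.trans (Lp.coeFn_const ..).symm⟩

end Koopman

theorem starProjection_eqLocus_koopman [IsProbabilityMeasure η] (hη : Ergodic f η)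
    {ψ : X → ℝ} (hψ : MemLp ψ 2 η) :
    ((koopman hη.toMeasurePreserving).eqLocus
      (1 : Lp ℝ 2 η →L[ℝ] Lp ℝ 2 η)).starProjection (hψ.toLp ψ) =
      Lp.const 2 η (∫ x, ψ x ∂η) := by
  have hfixed : koopman hη.toMeasurePreserving (Lp.const 2 η (∫ x, ψ x ∂η)) =
      Lp.const 2 η (∫ x, ψ x ∂η) := by
    rw [← MemLp.toLp_const]
    rfl
  refine Submodule.eq_starProjection_of_mem_orthogonal hfixed ?_
  rw [Submodule.mem_orthogonal]
  intro u hu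
  obtain ⟨b, rfl⟩ := exists_eq_const_of_koopman_eq hη hu
  have hzero : ∫ x, (hψ.toLp ψ - Lp.const 2 η (∫ x, ψ x ∂η) : Lp ℝ 2 η) x ∂η = 0 := by
    rw [integral_congr_ae ((Lp.coeFn_sub _ _).trans <|
      hψ.coeFn_toLp.sub (Lp.coeFn_const ..))]
    simp [integral_sub (hψ.integrable one_le_two) (integrable_const _)]
  rw [← indicatorConstLp_univ, L2.inner_indicatorConstLp_eq_inner_setIntegral, setIntegral_univ,
    hzero, inner_zero_right]

theorem tendstoInMeasure_birkhoffAverage [IsProbabilityMeasure η] (hη : Ergodic f η)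
    {ψ : X → ℝ} (hψ : MemLp ψ 2 η) :
    TendstoInMeasure η (fun n ↦ birkhoffAverage ℝ f ψ n) atTop fun _ ↦ ∫ x, ψ x ∂η := by
  have hnorm : ‖(koopman hη.toMeasurePreserving : Lp ℝ 2 η →L[ℝ] Lp ℝ 2 η)‖ ≤ 1 :=
    norm_koopman_le hη.toMeasurePreserving
  have hlim := ContinuousLinearMap.tendsto_birkhoffAverage_orthogonalProjection _ hnorm
    (hψ.toLp ψ)
  rw [← Submodule.starProjection_apply, starProjection_eqLocus_koopman hη hψ] at hlim
  exact (tendstoInMeasure_of_tendsto_Lp hlim).congr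
    (birkhoffAverage_koopman_ae_eq hη.toMeasurePreserving hψ) (Lp.coeFn_const ..)

theorem tendsto_measure_birkhoff_le_mul [IsProbabilityMeasure η] (hη : Ergodic f η)
    {ψ : X → ℝ} (hψ : MemLp ψ 2 η) {c : ℝ} (hc : c < ∫ x, ψ x ∂η) :
    Tendsto (fun n : ℕ ↦ η {x | birkhoff f ψ n x ≤ c * n}) atTop (𝓝 0) := by
  have hlim := tendstoInMeasure_iff_norm.1 (tendstoInMeasure_birkhoffAverage hη hψ) _
    (sub_pos.2 hc)
  refine tendsto_of_tendsto_of_tendsto_of_le_of_le' tendsto_const_nhds hlim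
    (Eventually.of_forall fun _ ↦ zero_le) ?_
  filter_upwards [eventually_gt_atTop 0] with n hn
  refine measure_mono fun x hx ↦ ?_
  have havg : birkhoffAverage ℝ f ψ n x ≤ c := by
    rw [birkhoffAverage, smul_eq_mul, inv_mul_le_iff₀ (by exact_mod_cast hn), mul_comm]
    exact hx
  change _ ≤ ‖_‖
  rw [Real.norm_eq_abs, abs_sub_comm]
  exact (sub_le_sub_left havg _).trans (le_abs_self _)

end MeanErgodic

section LargeSets

variable {X : Type*} [MeasurableSpace X] {η : Measure X}

theorem tendsto_measure_of_forall_eventually {G : Set X} {p : ℕ → X → Prop}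
    (h : ∀ x ∈ G, ∀ᶠ n in atTop, p n x) :
    Tendsto (fun n ↦ η {x ∈ G | p n x}) atTop (𝓝 (η G)) := by
  set A : ℕ → Set X := fun N ↦ {x ∈ G | ∀ n ≥ N, p n x}
  have hmono : Monotone A := fun _ _ hNN' _ hx ↦ ⟨hx.1, fun n hn ↦ hx.2 n (hNN'.trans hn)⟩
  have hunion : ⋃ N, A N = G := by
    refine Subset.antisymm (iUnion_subset fun _ _ hx ↦ hx.1) fun x hx ↦ mem_iUnion.2 ?_
    obtain ⟨N, hN⟩ := eventually_atTop.1 (h x hx)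
    exact ⟨N, hx, hN⟩
  have hlim : Tendsto (fun N ↦ η (A N)) atTop (𝓝 (η G)) :=
    hunion ▸ tendsto_measure_iUnion_atTop hmono
  exact tendsto_of_tendsto_of_tendsto_of_le_of_le hlim tendsto_const_nhds
    (fun n ↦ measure_mono fun _ hx ↦ ⟨hx.1, hx.2 n le_rfl⟩)
    fun _ ↦ measure_mono fun _ hx ↦ hx.1

theorem tendsto_measure_sdiff {ι : Type*} {l : Filter ι} {A B : ι → Set X} {a : ℝ≥0∞}
    (ha : a ≠ ∞) (hA : Tendsto (fun i ↦ η (A i)) l (𝓝 a))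
    (hB : Tendsto (fun i ↦ η (B i)) l (𝓝 0)) :
    Tendsto (fun i ↦ η (A i \ B i)) l (𝓝 a) := by
  have hsub := ENNReal.Tendsto.sub hA hB (Or.inl ha)
  rw [tsub_zero] at hsub
  exact tendsto_of_tendsto_of_tendsto_of_le_of_le hsub hA (fun _ ↦ le_measure_sdiff)
    fun _ ↦ measure_mono sdiff_subset

end LargeSets

section PartitionApproximation

variable {X : Type*} [MetricSpace X]

theorem eventually_forall_dist_lt_imp_eq {ι : Type*} [Finite ι] {K : ι → Set X}
    (hK : ∀ i, IsCompact (K i)) (hdisj : Pairwise fun i j ↦ Disjoint (K i) (K j)) :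
    ∀ᶠ ε in 𝓝[>] (0 : ℝ), ∀ i j, ∀ x ∈ K i, ∀ y ∈ K j, dist x y < ε → i = j := by
  refine eventually_all.2 fun i ↦ eventually_all.2 fun j ↦ ?_
  by_cases hij : i = j
  · exact Eventually.of_forall fun _ _ _ _ _ _ ↦ hij
  obtain ⟨r, hr, hsep⟩ :=
    Metric.exists_pos_forall_lt_edist (hK i) (hK j).isClosed (hdisj hij)
  filter_upwards [Ioo_mem_nhdsGT (NNReal.coe_pos.2 hr)] with ε hε x hx y hy hxy
  have hrxy := hsep x hx y hy
  rw [edist_nndist, ENNReal.coe_lt_coe, ← NNReal.coe_lt_coe, coe_nndist] at hrxy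
  exact absurd (hxy.trans hε.2) hrxy.le.not_gt

theorem exists_measure_lt_forall_dist_lt_imp_eq [MeasurableSpace X] [OpensMeasurableSpace X]
    {η : Measure X} [IsFiniteMeasure η] [η.InnerRegularCompactLTTop] {ι : Type*} [Finite ι]
    [MeasurableSpace ι] [MeasurableSingletonClass ι] {P : X → ι} (hP : Measurable P)
    {a : ℝ≥0∞} (ha : a ≠ 0) :
    ∃ U, MeasurableSet U ∧ η U < a ∧
      ∀ᶠ ε in 𝓝[>] (0 : ℝ), ∀ x ∉ U, ∀ y ∉ U, dist x y < ε → P x = P y := by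
  have hcell (i : ι) : MeasurableSet (P ⁻¹' {i}) := hP (measurableSet_singleton i)
  obtain ⟨b, hb, hba⟩ := ENNReal.exists_pos_sum_of_countable' ha ι
  choose K hKP hKc hKη using fun i ↦
    (hcell i).exists_isCompact_sdiff_lt (measure_ne_top η _) (hb i).ne'
  refine ⟨⋃ i, P ⁻¹' {i} \ K i,
    MeasurableSet.iUnion fun i ↦ (hcell i).diff (hKc i).measurableSet,
    ((measure_iUnion_le _).trans (ENNReal.tsum_le_tsum fun i ↦ (hKη i).le)).trans_lt hba, ?_⟩
  have hdisj : Pairwise fun i j ↦ Disjoint (K i) (K j) := fun i j hij ↦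
    Set.disjoint_left.2 fun x hxi hxj ↦ hij ((hKP i hxi).symm.trans (hKP j hxj))
  filter_upwards [eventually_forall_dist_lt_imp_eq hKc hdisj] with ε hε x hx y hy
  have hmem {z : X} (hz : z ∉ ⋃ i, P ⁻¹' {i} \ K i) : z ∈ K (P z) := by
    by_contra h
    exact hz (mem_iUnion.2 ⟨P z, rfl, h⟩)
  exact hε _ _ x (hmem hx) y (hmem hy)

end PartitionApproximation

section DynamicalBalls

variable {X : Type*} [MetricSpace X] {f : X → X}

theorem mem_dynBall_self (x : X) (n : ℕ) {ε : ℝ} (hε : 0 < ε) : x ∈ dynBall f x n ε :=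
  fun j _ ↦ by rwa [dist_self]

theorem mem_dynBall_symm {x y : X} {n : ℕ} {ε : ℝ} (h : y ∈ dynBall f x n ε) :
    x ∈ dynBall f y n ε :=
  fun j hj ↦ dist_comm (f^[j] y) _ ▸ h j hj

theorem dynBall_subset_of_le (x : X) {m n : ℕ} (hnm : n ≤ m) (ε : ℝ) :
    dynBall f x m ε ⊆ dynBall f x n ε :=
  fun _ hy j hj ↦ hy j (hj.trans hnm)

theorem disjoint_dynBall {x y : X} {n : ℕ} {ε : ℝ} (h : y ∉ dynBall f x n (2 * ε)) :
    Disjoint (dynBall f x n ε) (dynBall f y n ε) := by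
  refine Set.disjoint_left.2 fun z hzx hzy ↦ h fun j hj ↦ ?_
  linarith [dist_triangle_right (f^[j] x) (f^[j] y) (f^[j] z), hzx j hj, hzy j hj]

variable [MeasurableSpace X] [OpensMeasurableSpace X]

theorem measurableSet_dynBall (hf : Measurable f) (x : X) (n : ℕ) (ε : ℝ) :
    MeasurableSet (dynBall f x n ε) := by
  have hball : dynBall f x n ε = ⋂ j ≤ n, f^[j] ⁻¹' Metric.ball (f^[j] x) ε := by
    ext y
    simp [dynBall, dist_comm]
  rw [hball]
  exact MeasurableSet.iInter fun j ↦ MeasurableSet.iInter fun _ ↦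
    hf.iterate j measurableSet_ball

variable {μ : Measure X} [IsFiniteMeasure μ]

theorem card_mul_le_measureReal_of_pairwise_notMem_dynBall (hf : Measurable f) {s : Finset X}
    {n : ℕ} {ε p : ℝ} {S : Set X}
    (hsep : (s : Set X).Pairwise fun x y ↦ y ∉ dynBall f x n (2 * ε))
    (hS : ∀ x ∈ s, dynBall f x n ε ⊆ S) (hp : ∀ x ∈ s, p ≤ μ.real (dynBall f x n ε)) :
    s.card * p ≤ μ.real S := by
  have hdisj : (s : Set X).PairwiseDisjoint fun x ↦ dynBall f x n ε :=
    fun x hx y hy hxy ↦ disjoint_dynBall (hsep hx hy hxy)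
  calc s.card * p = ∑ _x ∈ s, p := by rw [Finset.sum_const, nsmul_eq_mul]
    _ ≤ ∑ x ∈ s, μ.real (dynBall f x n ε) := Finset.sum_le_sum hp
    _ = μ.real (⋃ x ∈ s, dynBall f x n ε) :=
      (measureReal_biUnion_finset hdisj fun x _ ↦ measurableSet_dynBall hf x n ε).symm
    _ ≤ μ.real S := measureReal_mono (iUnion₂_subset hS)

theorem ncard_image_mul_le_mul_measureReal (hf : Measurable f) {α : Type*} [Finite α]
    {name : X → α} {A S : Set X} {n : ℕ} {ε p H : ℝ} (hε : 0 < ε) (hp₀ : 0 ≤ p) (hH : 0 ≤ H)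
    (hname : ∀ x ∈ A, ((name '' (A ∩ dynBall f x n (2 * ε))).ncard : ℝ) ≤ H)
    (hS : ∀ x ∈ A, dynBall f x n ε ⊆ S) (hp : ∀ x ∈ A, p ≤ μ.real (dynBall f x n ε)) :
    (name '' A).ncard * p ≤ H * μ.real S := by
  classical
  obtain ⟨s, hsA, hs⟩ := Finset.subset_set_image_iff.1 (toFinite (name '' A)).coe_toFinset.subset
  obtain ⟨t, hts, hsep, hcover⟩ := exists_pairwise_not_of_refl_of_symm
    (fun x : X ↦ mem_dynBall_self (f := f) x n (mul_pos two_pos hε))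
    (fun _ _ ↦ mem_dynBall_symm) s
  have htA {x : X} (hx : x ∈ t) : x ∈ A := hsA (hts hx)
  have himage : name '' A ⊆ ⋃ x ∈ t, name '' (A ∩ dynBall f x n (2 * ε)) := by
    rintro a ha
    rw [← (toFinite (name '' A)).mem_toFinset, ← hs, Finset.mem_image] at ha
    obtain ⟨y, hy, rfl⟩ := ha
    obtain ⟨x, hx, hxy⟩ := hcover y hy
    exact mem_iUnion₂.2 ⟨x, hx, mem_image_of_mem name ⟨hsA hy, hxy⟩⟩
  have hcard : ((name '' A).ncard : ℝ) ≤ t.card * H := by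
    have hunion := (Set.ncard_le_ncard himage).trans (Finset.set_ncard_biUnion_le t _)
    calc ((name '' A).ncard : ℝ)
        ≤ ∑ x ∈ t, ((name '' (A ∩ dynBall f x n (2 * ε))).ncard : ℝ) := by exact_mod_cast hunion
      _ ≤ ∑ _x ∈ t, H := Finset.sum_le_sum fun x hx ↦ hname x (htA hx)
      _ = t.card * H := by rw [Finset.sum_const, nsmul_eq_mul]
  calc (name '' A).ncard * p ≤ t.card * H * p := by gcongr
    _ = H * (t.card * p) := by ring
    _ ≤ H * μ.real S := by
      gcongr
      exact card_mul_le_measureReal_of_pairwise_notMem_dynBall hf hsep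
        (fun x hx ↦ hS x (htA hx)) fun x hx ↦ hp x (htA hx)

end DynamicalBalls

section BirkhoffSums

variable {X : Type*} {f : X → X}

theorem birkhoff_add_mul_le_birkhoff {φ : X → ℝ} {b : ℝ} (hφ : ∀ x, b ≤ φ x) {m n : ℕ}
    (hnm : n ≤ m) (x : X) : birkhoff f φ n x + (m - n) * b ≤ birkhoff f φ m x := by
  obtain ⟨l, rfl⟩ := Nat.exists_eq_add_of_le hnm
  have htail := Finset.card_nsmul_le_sum (Finset.range l) (fun j ↦ φ (f^[n + j] x)) b
    fun _ _ ↦ hφ _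
  rw [Finset.card_range, nsmul_eq_mul] at htail
  rw [birkhoff, birkhoff, Finset.sum_range_add, Nat.cast_add, add_sub_cancel_left]
  gcongr

/-- The itinerary of length `n` of a point through the partition given by the fibers of `P`. -/
def itinerary {α : Type*} (f : X → X) (P : X → α) (n : ℕ) (x : X) : Fin n → α :=
  fun j ↦ P (f^[j] x)

theorem measurable_itinerary [MeasurableSpace X] {α : Type*} [MeasurableSpace α]
    (hf : Measurable f) {P : X → α} (hP : Measurable P) (n : ℕ) :
    Measurable (itinerary f P n) :=
  measurable_pi_lambda _ fun j ↦ hP.comp (hf.iterate j)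

variable [MetricSpace X]

theorem birkhoff_le_birkhoff_add_of_mem_dynBall {ψ : X → ℝ} {ε t : ℝ}
    (hψ : ∀ ⦃u v⦄, dist u v < ε → dist (ψ u) (ψ v) < t) {x y : X} {n : ℕ}
    (hy : y ∈ dynBall f x n ε) : birkhoff f ψ n x ≤ birkhoff f ψ n y + n * t := by
  calc birkhoff f ψ n x ≤ ∑ j ∈ Finset.range n, (ψ (f^[j] y) + t) :=
        Finset.sum_le_sum fun j hj ↦ by
          linarith [(abs_lt.1 (hψ (hy j (Finset.mem_range.1 hj).le))).2]
    _ = birkhoff f ψ n y + n * t := by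
      rw [Finset.sum_add_distrib, Finset.sum_const, Finset.card_range, nsmul_eq_mul, birkhoff]

theorem hammingDist_itinerary_le {α : Type*} [DecidableEq α] {P : X → α} {U : Set X} {ε : ℝ}
    (hU : ∀ u ∉ U, ∀ v ∉ U, dist u v < ε → P u = P v) {x y : X} {n : ℕ}
    (hy : y ∈ dynBall f x n ε) :
    (hammingDist (itinerary f P n y) (itinerary f P n x) : ℝ) ≤
      birkhoff f (U.indicator 1) n x + birkhoff f (U.indicator 1) n y := by
  rw [hammingDist, Finset.card_filter, Nat.cast_sum, birkhoff, birkhoff,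
    ← Finset.sum_add_distrib, Finset.sum_range]
  refine Finset.sum_le_sum fun j _ ↦ ?_
  have hindicator (z : X) : (0 : ℝ) ≤ U.indicator 1 z := indicator_nonneg (fun _ _ ↦ zero_le_one) z
  by_cases hx : f^[j] x ∈ U
  · rw [indicator_of_mem hx]
    split_ifs <;> simp [hindicator, add_nonneg]
  by_cases hy' : f^[j] y ∈ U
  · rw [indicator_of_mem hy']
    split_ifs <;> simp [hindicator, add_nonneg]
  have hname : itinerary f P n y j = itinerary f P n x j :=
    (hU _ hx _ hy' (hy j j.2.le)).symm
  simp [hname, hindicator, add_nonneg]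

theorem ncard_image_itinerary_le_exp {α : Type*} [Fintype α] {P : X → α} {U : Set X} {ε σ : ℝ}
    (hσ₀ : 0 < σ) (hσ₁ : σ ≤ 1) (hU : ∀ u ∉ U, ∀ v ∉ U, dist u v < ε → P u = P v) {n : ℕ}
    {A : Set X} (hA : ∀ x ∈ A, birkhoff f (U.indicator 1) n x ≤ σ * n) {x : X} (hx : x ∈ A) :
    ((itinerary f P n '' (A ∩ dynBall f x n ε)).ncard : ℝ) ≤
      Real.exp (n * (Fintype.card α * σ + 2 * Real.negMulLog σ)) := by
  classical
  have hsub : itinerary f P n '' (A ∩ dynBall f x n ε) ⊆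
      {v | (hammingDist v (itinerary f P n x) : ℝ) ≤ 2 * (σ * n)} := by
    rintro _ ⟨y, ⟨hyA, hy⟩, rfl⟩
    have hdist := hammingDist_itinerary_le hU hy
    change (_ : ℝ) ≤ _
    linarith [hA x hx, hA y hyA]
  calc ((itinerary f P n '' (A ∩ dynBall f x n ε)).ncard : ℝ)
      ≤ {v | (hammingDist v (itinerary f P n x) : ℝ) ≤ 2 * (σ * n)}.ncard := by
        exact_mod_cast ncard_le_ncard hsub (toFinite _)
    _ ≤ _ := card_hammingBall_le_exp _ hσ₀ hσ₁ _
    _ = Real.exp (n * (Fintype.card α * σ + 2 * Real.negMulLog σ)) := by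
        rw [Fintype.card_fin, Real.negMulLog]
        ring_nf

end BirkhoffSums

section GibbsLowerBound

/-- Non-lacunarity of a set of times, phrased without an enumeration: every large `n` is followed
by a time `m ∈ s` with `m / n` arbitrarily close to `1`. -/
def IsNonLacunar (s : Set ℕ) : Prop :=
  ∀ δ > 0, ∀ᶠ n : ℕ in atTop, ∃ m ∈ s, n ≤ m ∧ (m : ℝ) ≤ (1 + δ) * n

theorem isNonLacunar_of_tendsto {s : Set ℕ} {u : ℕ → ℕ} (hu : StrictMono u) (hus : ∀ i, u i ∈ s)
    (hlim : Tendsto (fun i ↦ ((u (i + 1) : ℝ) - u i) / u i) atTop (𝓝 0)) : IsNonLacunar s := by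
  classical
  intro δ hδ
  obtain ⟨I, hI⟩ := eventually_atTop.1 (hlim.eventually_lt_const hδ)
  filter_upwards [eventually_gt_atTop (u (I + 1))] with n hn
  have hex : ∃ i, n ≤ u i := ⟨n, hu.le_apply⟩
  have hzero : Nat.find hex ≠ 0 := fun h ↦
    ((hu.monotone (Nat.zero_le (I + 1))).trans_lt hn).not_ge (h ▸ Nat.find_spec hex)
  obtain ⟨i, hi⟩ : ∃ i, Nat.find hex = i + 1 := Nat.exists_eq_succ_of_ne_zero hzero
  have hnext : n ≤ u (i + 1) := hi ▸ Nat.find_spec hex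
  have hprev : u i < n := not_le.1 (Nat.find_min hex (hi ▸ i.lt_succ_self))
  have hIi : I + 1 ≤ i := Nat.lt_succ_iff.1 (hu.lt_iff_lt.1 (hn.trans_le hnext))
  have hpos : (0 : ℝ) < u i := by exact_mod_cast (hu.le_apply).trans_lt' (by omega : 0 < i)
  have hgap := hI i (by omega)
  rw [div_lt_iff₀ hpos] at hgap
  have hprev' : (u i : ℝ) ≤ n := by exact_mod_cast hprev.le
  exact ⟨u (i + 1), hus _, hnext, by nlinarith⟩

variable {X : Type*} [MetricSpace X] [MeasurableSpace X] {f : X → X} {φ : X → ℝ} {μ : Measure X}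
  {p : ℝ}

/-- The lower half of the Gibbs property of `μ` on `G` for the potential `φ` with constant `p`, at
every large time but only up to subexponential factors. -/
def GibbsLowerBoundOn (f : X → X) (φ : X → ℝ) (μ : Measure X) (G : Set X) (p : ℝ) : Prop :=
  ∀ᶠ ε in 𝓝[>] (0 : ℝ), ∀ σ > 0, ∀ x ∈ G, ∀ᶠ n : ℕ in atTop,
    Real.exp (birkhoff f φ n x - n * (p + σ)) ≤ μ.real (dynBall f x n ε)

theorem eventually_exp_le_measureReal_dynBall [IsFiniteMeasure μ] (hφ : BddBelow (range φ))
    {s : Set ℕ} (hs : IsNonLacunar s) {K ε : ℝ} (hK : 0 < K) {x : X}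
    (hμ : ∀ m ∈ s, K⁻¹ * Real.exp (birkhoff f φ m x - m * p) ≤ μ.real (dynBall f x m ε))
    {σ : ℝ} (hσ : 0 < σ) :
    ∀ᶠ n : ℕ in atTop,
      Real.exp (birkhoff f φ n x - n * (p + σ)) ≤ μ.real (dynBall f x n ε) := by
  obtain ⟨b, hb⟩ := hφ
  set δ := σ / (2 * (|b - p| + 1)) with hδ
  have hδpos : 0 < δ := by positivity
  have hδb : δ * |b - p| ≤ σ / 2 := by
    rw [hδ, div_mul_eq_mul_div, div_le_iff₀ (by positivity)]
    nlinarith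
  have hlarge : ∀ᶠ n : ℕ in atTop, Real.log K ≤ σ / 2 * n :=
    (tendsto_natCast_atTop_atTop.const_mul_atTop (half_pos hσ)).eventually_ge_atTop _
  filter_upwards [hs δ hδpos, hlarge] with n ⟨m, hms, hnm, hmn⟩ hn
  refine le_trans ?_ ((hμ m hms).trans (measureReal_mono (dynBall_subset_of_le x hnm ε)))
  have hsum := birkhoff_add_mul_le_birkhoff (f := f) (fun z ↦ hb (mem_range_self z)) hnm x
  have hskip : (m - n) * (p - b) ≤ σ / 2 * n := by
    have hnm' : (n : ℝ) ≤ m := by exact_mod_cast hnm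
    calc (m - n) * (p - b) ≤ (m - n) * |b - p| :=
          mul_le_mul_of_nonneg_left (abs_sub_comm b p ▸ le_abs_self _) (sub_nonneg.2 hnm')
      _ ≤ δ * n * |b - p| := mul_le_mul_of_nonneg_right (by linarith) (abs_nonneg _)
      _ = δ * |b - p| * n := by ring
      _ ≤ σ / 2 * n := by gcongr
  rw [← Real.exp_log (inv_pos.2 hK), ← Real.exp_add, Real.log_inv]
  gcongr
  linarith

theorem gibbsLowerBoundOn_of_isNonLacunar [IsFiniteMeasure μ] (hφ : BddBelow (range φ))
    {G : Set X} {times : X → Set ℕ} (htimes : ∀ x ∈ G, IsNonLacunar (times x))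
    (hμ : ∀ᶠ ε in 𝓝[>] (0 : ℝ), ∃ K > 0, ∀ x ∈ G, ∀ m ∈ times x,
      K⁻¹ * Real.exp (birkhoff f φ m x - m * p) ≤ μ.real (dynBall f x m ε)) :
    GibbsLowerBoundOn f φ μ G p := by
  filter_upwards [hμ] with ε ⟨K, hK, hε⟩ σ hσ x hx
  exact eventually_exp_le_measureReal_dynBall hφ (htimes x hx) hK (hε x hx) hσ

end GibbsLowerBound

section LargeDeviations

variable {X : Type*} [MeasurableSpace X] {f : X → X} {η μ : Measure X}

theorem isBoundedUnder_le_log_measureReal_div [IsFiniteMeasure μ] (S : ℕ → Set X) :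
    IsBoundedUnder (· ≤ ·) atTop fun n : ℕ ↦ Real.log (μ.real (S n)) / n := by
  refine isBoundedUnder_of_eventually_le (a := μ.real univ) ?_
  filter_upwards [eventually_ge_atTop 1] with n hn
  calc Real.log (μ.real (S n)) / n ≤ μ.real (S n) / n := by
        gcongr
        exact Real.log_le_self measureReal_nonneg
    _ ≤ μ.real (S n) := div_le_self measureReal_nonneg (by exact_mod_cast hn)
    _ ≤ μ.real univ := measureReal_mono (subset_univ _)

variable [IsProbabilityMeasure η]

theorem tendsto_measure_inter_mul_lt_birkhoff (hη : Ergodic f η) {A : ℕ → Set X}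
    (hA : Tendsto (fun n ↦ η (A n)) atTop (𝓝 1)) {ψ : X → ℝ} (hψ : MemLp ψ 2 η) {c : ℝ}
    (hc : c < ∫ x, ψ x ∂η) :
    Tendsto (fun n : ℕ ↦ η (A n ∩ {x | c * n < birkhoff f ψ n x})) atTop (𝓝 1) := by
  have hdiff := tendsto_measure_sdiff ENNReal.one_ne_top hA
    (tendsto_measure_birkhoff_le_mul hη hψ hc)
  simpa only [sdiff_eq, compl_ofPred, not_le] using hdiff

theorem tendsto_measure_inter_birkhoff_lt_mul (hη : Ergodic f η) {A : ℕ → Set X}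
    (hA : Tendsto (fun n ↦ η (A n)) atTop (𝓝 1)) {ψ : X → ℝ} (hψ : MemLp ψ 2 η) {c : ℝ}
    (hc : ∫ x, ψ x ∂η < c) :
    Tendsto (fun n : ℕ ↦ η (A n ∩ {x | birkhoff f ψ n x < c * n})) atTop (𝓝 1) := by
  have hneg := tendsto_measure_inter_mul_lt_birkhoff hη hA hψ.neg (c := -c)
    (by simpa only [Pi.neg_apply, integral_neg, neg_lt_neg_iff] using hc)
  simpa only [birkhoff, Pi.neg_apply, Finset.sum_neg_distrib, neg_mul, neg_lt_neg_iff] using hneg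

variable [MetricSpace X] [OpensMeasurableSpace X]

variable {G : Set X} {φ ψ : X → ℝ} {p c : ℝ}

theorem exists_typicalSets_of_gibbsLowerBoundOn [η.InnerRegularCompactLTTop]
    (hη : Ergodic f η) (hG : η G = 1) (hφ : MemLp φ 2 η) (hμ : GibbsLowerBoundOn f φ μ G p)
    (hψ : MemLp ψ 2 η) (hψ_unif : UniformContinuous ψ) (hc : c < ∫ x, ψ x ∂η) {α : Type*}
    [Finite α] [MeasurableSpace α] [MeasurableSingletonClass α] {P : X → α} (hP : Measurable P)
    {σ : ℝ} (hσ : 0 < σ) :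
    ∃ ε > 0, ∃ U : Set X, ∃ A : ℕ → Set X, Tendsto (fun n ↦ η (A n)) atTop (𝓝 1) ∧
      (∀ u ∉ U, ∀ v ∉ U, dist u v < 2 * ε → P u = P v) ∧
      ∀ n : ℕ, ∀ x ∈ A n, birkhoff f (U.indicator 1) n x ≤ σ * n ∧
        dynBall f x n ε ⊆ {y | c * n < birkhoff f ψ n y} ∧
        Real.exp (n * (∫ x, φ x ∂η - p - 2 * σ)) ≤ μ.real (dynBall f x n ε) := by
  obtain ⟨c', hcc', hc'⟩ := exists_between hc
  obtain ⟨U, hUm, hUσ, hU⟩ := exists_measure_lt_forall_dist_lt_imp_eq (η := η) hP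
    (ENNReal.ofReal_pos.2 hσ).ne'
  have hU_int : ∫ x, U.indicator 1 x ∂η < σ := by
    rw [integral_indicator_one hUm]
    exact (ENNReal.lt_ofReal_iff_toReal_lt (measure_ne_top η U)).1 hUσ
  obtain ⟨r, hr, hψr⟩ := Metric.uniformContinuous_iff.1 hψ_unif _ (sub_pos.2 hcc')
  have hdouble : Tendsto (fun ε : ℝ ↦ 2 * ε) (𝓝[>] 0) (𝓝[>] 0) :=
    tendsto_nhdsWithin_iff.2
      ⟨((continuous_const_mul 2).tendsto' 0 0 (mul_zero 2)).mono_left nhdsWithin_le_nhds,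
        eventually_mem_nhdsWithin.mono fun _ hε ↦ mem_Ioi.2 (mul_pos two_pos (mem_Ioi.1 hε))⟩
  obtain ⟨ε, hεμ, hεU, hε, hεr⟩ :=
    (hμ.and <| (hdouble.eventually hU).and <| Ioo_mem_nhdsGT hr).exists
  have hA := tendsto_measure_inter_birkhoff_lt_mul hη
    (tendsto_measure_inter_mul_lt_birkhoff hη
      (tendsto_measure_inter_mul_lt_birkhoff hη
        (hG ▸ tendsto_measure_of_forall_eventually (hεμ σ hσ)) hφ (sub_lt_self _ hσ)) hψ hc')
    (memLp_indicator_const 2 hUm 1 (Or.inr (measure_ne_top η U))) hU_int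
  refine ⟨ε, hε, U, _, hA, hεU, ?_⟩
  rintro n x ⟨⟨⟨⟨-, hx_gibbs⟩, hxφ⟩, hxψ⟩, hxU⟩
  have hφ_sum : (∫ x, φ x ∂η - σ) * n < birkhoff f φ n x := hxφ
  have hψ_sum : c' * n < birkhoff f ψ n x := hxψ
  refine ⟨hxU.le, fun y hy ↦ ?_, (Real.exp_le_exp.2 ?_).trans hx_gibbs⟩
  · have hxy := birkhoff_le_birkhoff_add_of_mem_dynBall
      (fun u v huv ↦ hψr (huv.trans hεr)) hy
    change c * n < birkhoff f ψ n y
    linarith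
  · linarith

variable [IsFiniteMeasure μ]

theorem partEntropy_add_le_log_measureReal {α : Type} [Fintype α] [MeasurableSpace α]
    [MeasurableSingletonClass α] (hf : Measurable f) {name : X → α} (hname : Measurable name)
    {A S : Set X} {n : ℕ} {ε d h q : ℝ} (hε : 0 < ε) (hd : d < 1) (hA : 1 - d ≤ η.real A)
    (hcount : ∀ x ∈ A, ((name '' (A ∩ dynBall f x n (2 * ε))).ncard : ℝ) ≤ Real.exp h)
    (hS : ∀ x ∈ A, dynBall f x n ε ⊆ S)
    (hq : ∀ x ∈ A, Real.exp q ≤ μ.real (dynBall f x n ε)) :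
    partEntropy η name + q ≤
      h + Real.log (μ.real S) + d * Real.log (Fintype.card α) + 1 := by
  have hne : A.Nonempty := nonempty_of_measureReal_ne_zero (μ := η) (by linarith)
  have hnames : (0 : ℝ) < (name '' A).ncard := by
    exact_mod_cast (ncard_pos (toFinite _)).2 (hne.image name)
  have hμS : 0 < μ.real S := by
    obtain ⟨x, hx⟩ := hne
    exact (Real.exp_pos q).trans_le ((hq x hx).trans (measureReal_mono (hS x hx)))
  have hlog := Real.log_le_log (by positivity) <|
    ncard_image_mul_le_mul_measureReal hf hε (Real.exp_nonneg q) (Real.exp_nonneg h) hcount hS hq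
  rw [Real.log_mul hnames.ne' (Real.exp_ne_zero q), Real.log_mul (Real.exp_ne_zero h) hμS.ne',
    Real.log_exp, Real.log_exp] at hlog
  linarith [partEntropy_le_log_ncard_image η hname hA]

theorem partEntropy_itinerary_add_le {α : Type} [Fintype α] [MeasurableSpace α]
    [MeasurableSingletonClass α] (hf : Measurable f) {P : X → α} (hP : Measurable P)
    {U A S : Set X} {n : ℕ} {ε σ q : ℝ} (hε : 0 < ε) (hσ₀ : 0 < σ) (hσ₁ : σ < 1)
    (hA : 1 - σ ≤ η.real A) (hU : ∀ u ∉ U, ∀ v ∉ U, dist u v < 2 * ε → P u = P v)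
    (hAU : ∀ x ∈ A, birkhoff f (U.indicator 1) n x ≤ σ * n)
    (hAS : ∀ x ∈ A, dynBall f x n ε ⊆ S)
    (hq : ∀ x ∈ A, Real.exp (n * q) ≤ μ.real (dynBall f x n ε)) :
    partEntropy η (itinerary f P n) + n * q ≤
      n * (Fintype.card α * σ + 2 * Real.negMulLog σ + σ * Real.log (Fintype.card α)) +
        Real.log (μ.real S) + 1 := by
  have hbound := partEntropy_add_le_log_measureReal hf (measurable_itinerary hf hP n) hε hσ₁ hA
    (fun x hx ↦ ncard_image_itinerary_le_exp hσ₀ hσ₁.le hU hAU hx) hAS hq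
  rw [Fintype.card_fun, Fintype.card_fin, Nat.cast_pow, Real.log_pow] at hbound
  linarith

theorem eventually_le_log_measureReal_div [η.InnerRegularCompactLTTop]
    (hη : Ergodic f η) (hG : η G = 1) (hφ : MemLp φ 2 η) (hμ : GibbsLowerBoundOn f φ μ G p)
    (hψ : MemLp ψ 2 η) (hψ_unif : UniformContinuous ψ) (hc : c < ∫ x, ψ x ∂η) {k : ℕ}
    {P : X → Fin k} (hP : Measurable P) {σ : ℝ} (hσ₀ : 0 < σ) (hσ₁ : σ < 1) :
    ∀ᶠ n : ℕ in atTop, entropyWrt f η P + ∫ x, φ x ∂η - p -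
        ((k + Real.log k + 4) * σ + 2 * Real.negMulLog σ) ≤
      Real.log (μ.real {x | c * n < birkhoff f ψ n x}) / n := by
  obtain ⟨ε, hε, U, A, hA, hU, hA'⟩ :=
    exists_typicalSets_of_gibbsLowerBoundOn hη hG hφ hμ hψ hψ_unif hc hP hσ₀
  have hmass : ∀ᶠ n in atTop, 1 - σ < η.real (A n) :=
    ((ENNReal.tendsto_toReal ENNReal.one_ne_top).comp hA).eventually_const_lt
      (sub_lt_self 1 hσ₀)
  have hentropy : ∀ᶠ n : ℕ in atTop,
      entropyWrt f η P - σ < partEntropy η (itinerary f P n) / n :=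
    eventually_lt_of_lt_liminf (sub_lt_self _ hσ₀) <| isBoundedUnder_of
      ⟨0, fun n ↦ div_nonneg (partEntropy_nonneg η _) n.cast_nonneg⟩
  have hlarge : ∀ᶠ n : ℕ in atTop, 1 ≤ σ * n :=
    (tendsto_natCast_atTop_atTop.const_mul_atTop hσ₀).eventually_ge_atTop _
  filter_upwards [hmass, hentropy, hlarge, eventually_gt_atTop 0] with n hn_mass hn_ent hn_large hn
  have hn' : (0 : ℝ) < n := by exact_mod_cast hn
  have hbound := partEntropy_itinerary_add_le hη.measurable hP hε hσ₀ hσ₁ hn_mass.le hU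
    (fun x hx ↦ (hA' n x hx).1) (fun x hx ↦ (hA' n x hx).2.1) fun x hx ↦ (hA' n x hx).2.2
  rw [Fintype.card_fin] at hbound
  rw [lt_div_iff₀ hn'] at hn_ent
  rw [le_div_iff₀ hn']
  linarith

theorem entropyWrt_add_integral_sub_le_liminf [η.InnerRegularCompactLTTop]
    (hη : Ergodic f η) (hG : η G = 1) (hφ : MemLp φ 2 η) (hμ : GibbsLowerBoundOn f φ μ G p)
    (hψ : MemLp ψ 2 η) (hψ_unif : UniformContinuous ψ) (hc : c < ∫ x, ψ x ∂η) {k : ℕ}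
    {P : X → Fin k} (hP : Measurable P) :
    entropyWrt f η P + ∫ x, φ x ∂η - p ≤
      atTop.liminf fun n : ℕ ↦ Real.log (μ.real {x | c * n < birkhoff f ψ n x}) / n := by
  have herror : Tendsto (fun σ : ℝ ↦ entropyWrt f η P + ∫ x, φ x ∂η - p -
      ((k + Real.log k + 4) * σ + 2 * Real.negMulLog σ)) (𝓝[>] 0)
      (𝓝 (entropyWrt f η P + ∫ x, φ x ∂η - p)) := by
    refine Tendsto.mono_left (Continuous.tendsto' ?_ _ _ ?_) nhdsWithin_le_nhds
    · fun_prop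
    · simp
  refine le_of_tendsto herror ?_
  filter_upwards [Ioo_mem_nhdsGT one_pos] with σ hσ
  exact le_liminf_of_le (isBoundedUnder_le_log_measureReal_div _).isCoboundedUnder_ge <|
    eventually_le_log_measureReal_div hη hG hφ hμ hψ hψ_unif hc hP hσ.1 hσ.2

theorem largeDeviations_lowerBound_ergodic_general [η.InnerRegularCompactLTTop]
    (hη : Ergodic f η) (hG : η G = 1) (hφ : MemLp φ 2 η) (hμ : GibbsLowerBoundOn f φ μ G p)
    (hψ : MemLp ψ 2 η) (hψ_unif : UniformContinuous ψ) (hc : c < ∫ x, ψ x ∂η) :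
    metricEntropy f η + ∫ x, φ x ∂η - p ≤
      atTop.liminf fun n : ℕ ↦ Real.log (μ.real {x | c * n < birkhoff f ψ n x}) / n := by
  have : Nonempty (Σ k : ℕ, {P : X → Fin k // Measurable P}) :=
    ⟨1, fun _ ↦ 0, measurable_const⟩
  rw [add_sub_assoc, ← le_sub_iff_add_le]
  refine ciSup_le fun P ↦ ?_
  rw [le_sub_iff_add_le, ← add_sub_assoc]
  exact entropyWrt_add_integral_sub_le_liminf hη hG hφ hμ hψ hψ_unif hc P.2.2

end LargeDeviations

/-- Large deviations lower bound over ergodic measures supported on `G`. -/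
theorem largeDeviations_lowerBound_ergodic
    {M : Type*} [MetricSpace M] [CompactSpace M] [MeasurableSpace M] [BorelSpace M]
    (f : M → M) (hf : IsLocalHomeomorph f) (hdense : DensePreorbits f)
    (δ₀ : ℝ) (hδ₀ : 0 < δ₀) (θ : ℝ) (hθ : 0 < θ)
    (G : Set M) (hG : G = gibbsSet f δ₀ θ)
    (φ : M → ℝ) (hφ : Continuous φ)
    (hH2 : BowenOnGibbs f φ δ₀ G)
    (hH3 : PressureLocatedOn f φ G)
    -- the sequence of Gibbs times of every point of `G` is non-lacunar
    (hnl : ∀ x ∈ G, ∃ ni : ℕ → ℕ, StrictMono ni ∧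
      (∀ i, IsGibbsTime f δ₀ x (ni i)) ∧
      (∀ m : ℕ, IsGibbsTime f δ₀ x m → ∃ i, ni i = m) ∧
      Filter.Tendsto (fun i : ℕ => ((ni (i + 1) : ℝ) - ni i) / ni i)
        Filter.atTop (nhds 0))
    -- `μφ` is the ergodic weak Gibbs measure (equilibrium state) of `(f,φ)`
    (μφ : Measure M) (hprob : IsProbabilityMeasure μφ) (herg : Ergodic f μφ)
    (hGibbs : ∀ ε : ℝ, 0 < ε → ε < δ₀ / 2 → ∃ K > 0,
      ∀ x ∈ G, ∀ n : ℕ, IsGibbsTime f δ₀ x n → ∀ y ∈ dynBall f x n ε,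
        ENNReal.ofReal (K⁻¹ * Real.exp (birkhoff f φ n y - (n : ℝ) * pres f φ))
            ≤ μφ (dynBall f x n ε) ∧
          μφ (dynBall f x n ε)
            ≤ ENNReal.ofReal (K * Real.exp (birkhoff f φ n y - (n : ℝ) * pres f φ)))
    (ψ : M → ℝ) (hψ : Continuous ψ) (c : ℝ)
    (η : Measure M) (hηprob : IsProbabilityMeasure η) (hηerg : Ergodic f η)
    (hηG : η G = 1) (hηψ : c < ∫ x, ψ x ∂η) :
    metricEntropy f η + ∫ x, φ x ∂η - pres f φ ≤
      Filter.atTop.liminf fun n : ℕ =>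
        Real.log ((μφ {x : M | c * (n : ℝ) < birkhoff f ψ n x}).toReal) / n := by
  have hφ_bdd : BddBelow (range φ) := (isCompact_range hφ).bddBelow
  have hnonlacunar : ∀ x ∈ G, IsNonLacunar {n | IsGibbsTime f δ₀ x n} := fun x hx ↦
    let ⟨_, hmono, htimes, _, hlim⟩ := hnl x hx
    isNonLacunar_of_tendsto hmono htimes hlim
  have hlower : GibbsLowerBoundOn f φ μφ G (pres f φ) := by
    refine gibbsLowerBoundOn_of_isNonLacunar hφ_bdd hnonlacunar ?_
    filter_upwards [Ioo_mem_nhdsGT (half_pos hδ₀)] with ε ⟨hε₀, hεδ₀⟩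
    obtain ⟨K, hK, hball⟩ := hGibbs ε hε₀ hεδ₀
    exact ⟨K, hK, fun x hx n hn ↦ (ENNReal.ofReal_le_iff_le_toReal (measure_ne_top _ _)).1
      (hball x hx n hn x (mem_dynBall_self x n hε₀)).1⟩
  have hLp {χ : M → ℝ} (hχ : Continuous χ) : MemLp χ 2 η :=
    hχ.memLp_of_hasCompactSupport (.of_compactSpace χ)
  exact largeDeviations_lowerBound_ergodic_general hηerg hηG (hLp hφ) hlower (hLp hψ)
    (CompactSpace.uniformContinuous_of_continuous hψ) hηψ

end PaperWG
end
end
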